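/- arXiv:math/0209036 — 3 statements merged into one kernel-verified Lean document; each statement's English description precedes it below -/
import Mathlib

section
/- Let V be a 4-dimensional real vector space, J a complex structure on V, ν a fixed nonzero alternating 4-linear form on V, and G the induced pairing on alternating bilinear forms. Then: (i) the set Λ²_J of J-invariant alternating bilinear forms on V is a 4-dimensional real subspace of the space of alternating bilinear forms; (ii) G restricts to a symmetric bilinear form on Λ²_J; (iii) this restricted form is nondegenerate of Lorentz signature, i.e. there exist a basis (ξ⁰, ξ¹, ξ², ξ³) of Λ²_J and a sign ε ∈ {1, −1} such that G(ξ⁰, ξ⁰) = ε, G(ξᵏ, ξᵏ) = −ε for k = 1, 2, 3, and G(ξᵃ, ξᵇ) = 0 for a ≠ b. -/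
/-- The wedge product of two linear functionals. -/
noncomputable def wdg {V : Type*} [AddCommGroup V] [Module ℝ V] (p q : V →ₗ[ℝ] ℝ) :
    AlternatingMap ℝ V ℝ (Fin 2) :=
  (Matrix.detRowAlternating (R := ℝ) (n := Fin 2)).compLinearMap (LinearMap.pi ![p, q])

lemma wdg_apply {V : Type*} [AddCommGroup V] [Module ℝ V] (p q : V →ₗ[ℝ] ℝ) (x y : V) :
    wdg p q ![x, y] = p x * q y - p y * q x := by
  simp only [wdg, AlternatingMap.compLinearMap_apply]
  refine (Matrix.det_fin_two (Matrix.of fun i => LinearMap.pi ![p, q] (![x, y] i))).trans ?_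
  simp
  ring

lemma alt_add {V : Type*} [AddCommGroup V] [Module ℝ V] (α : AlternatingMap ℝ V ℝ (Fin 2))
    (x y : V) : α ![x, y] = - α ![y, x] := by
  have h := α.map_swap ![y, x] (i := 0) (j := 1) (by decide)
  rw [← h]
  congr 1
  ext i
  fin_cases i <;> simp

lemma alt_self {V : Type*} [AddCommGroup V] [Module ℝ V] (α : AlternatingMap ℝ V ℝ (Fin 2))
    (x : V) : α ![x, x] = 0 :=
  α.map_eq_zero_of_eq ![x, x] (i := 0) (j := 1) (by simp) (by decide)

lemma alt_neg_right {V : Type*} [AddCommGroup V] [Module ℝ V]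
    (α : AlternatingMap ℝ V ℝ (Fin 2)) (x y : V) : α ![x, -y] = - α ![x, y] := by
  have h := α.map_update_neg ![x, y] 1 y
  have e1 : Function.update ![x, y] 1 (-y) = ![x, -y] := by
    ext i; fin_cases i <;> simp
  have e2 : Function.update ![x, y] 1 y = ![x, y] := by
    ext i; fin_cases i <;> simp
  rwa [e1, e2] at h

/-- A basis adapted to the complex structure. -/
lemma exists_adapted_basis {V : Type*} [AddCommGroup V] [Module ℝ V]
    (hdim : Module.finrank ℝ V = 4)
    (J : V →ₗ[ℝ] V) (hJ : ∀ v : V, J (J v) = -v) :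
    ∃ b : Module.Basis (Fin 4) ℝ V, J (b 0) = b 1 ∧ J (b 1) = - b 0 ∧ J (b 2) = b 3 ∧
      J (b 3) = - b 2 := by
  have hnt : Nontrivial V := Module.nontrivial_of_finrank_pos (R := ℝ) (by omega)
  obtain ⟨e, he⟩ := exists_ne (0 : V)
  have hS : ∃ f : V, f ∉ Submodule.span ℝ (Set.range ![e, J e]) := by
    by_contra! h
    have h1 : Submodule.span ℝ (Set.range ![e, J e]) = ⊤ := by
      rw [eq_top_iff]; intro x _; exact h x
    have h2 := finrank_range_le_card (R := ℝ) ![e, J e]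
    rw [Set.finrank, h1, finrank_top, hdim] at h2
    simp at h2
  obtain ⟨f, hf⟩ := hS
  have hmem : ∀ a b : ℝ, a • e + b • J e ∈ Submodule.span ℝ (Set.range ![e, J e]) := by
    intro a b
    exact add_mem (Submodule.smul_mem _ _ (Submodule.subset_span ⟨0, rfl⟩))
      (Submodule.smul_mem _ _ (Submodule.subset_span ⟨1, rfl⟩))
  have key : ∀ a b : ℝ, a • e + b • J e = 0 → a = 0 ∧ b = 0 := by
    intro a b h
    have h2 : a • J e - b • e = 0 := by
      have := congrArg J h
      simpa [hJ, sub_eq_add_neg] using this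
    have h3 : (a ^ 2 + b ^ 2) • e = 0 := by
      have : (a ^ 2 + b ^ 2) • e = a • (a • e + b • J e) - b • (a • J e - b • e) := by module
      rw [this, h, h2]; simp
    have h4 : a ^ 2 + b ^ 2 = 0 := (smul_eq_zero.1 h3).resolve_right he
    constructor <;> nlinarith
  have hli : LinearIndependent ℝ ![e, J e, f, J f] := by
    rw [Fintype.linearIndependent_iff]
    intro g hg
    simp only [Fin.sum_univ_four] at hg
    simp at hg
    have hg2 : g 0 • J e - g 1 • e + g 2 • J f - g 3 • f = 0 := by
      have := congrArg J hg
      simpa [hJ, sub_eq_add_neg] using this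
    have h5 : (g 2 ^ 2 + g 3 ^ 2) • f =
        (-(g 2 * g 0 + g 3 * g 1)) • e + (g 3 * g 0 - g 2 * g 1) • J e := by
      have : (g 2 ^ 2 + g 3 ^ 2) • f - ((-(g 2 * g 0 + g 3 * g 1)) • e +
        (g 3 * g 0 - g 2 * g 1) • J e) = g 2 • (g 0 • e + g 1 • J e + g 2 • f + g 3 • J f)
          - g 3 • (g 0 • J e - g 1 • e + g 2 • J f - g 3 • f) := by module
      rw [hg, hg2] at this
      exact sub_eq_zero.1 (by simpa using this)
    have h6 : g 2 ^ 2 + g 3 ^ 2 = 0 := by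
      by_contra hne
      apply hf
      have := Submodule.smul_mem _ (g 2 ^ 2 + g 3 ^ 2)⁻¹ (hmem (-(g 2 * g 0 + g 3 * g 1))
        (g 3 * g 0 - g 2 * g 1))
      rw [← h5, smul_smul, inv_mul_cancel₀ hne, one_smul] at this
      exact this
    have h7 : g 2 = 0 := by nlinarith
    have h8 : g 3 = 0 := by nlinarith
    rw [h7, h8] at hg
    obtain ⟨h9, h10⟩ := key (g 0) (g 1) (by simpa using hg)
    intro i
    fin_cases i <;> assumption
  refine ⟨basisOfLinearIndependentOfCardEqFinrank hli (by simp [hdim]), ?_⟩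
  simp [hJ]

/-- The `J`-invariant form with prescribed values on the adapted basis. -/
noncomputable def frm {V : Type*} [AddCommGroup V] [Module ℝ V] (b : Module.Basis (Fin 4) ℝ V)
    (A B C D : ℝ) : AlternatingMap ℝ V ℝ (Fin 2) :=
  A • wdg (b.coord 0) (b.coord 1) + B • wdg (b.coord 2) (b.coord 3)
   + C • (wdg (b.coord 0) (b.coord 2) + wdg (b.coord 1) (b.coord 3))
   + D • (wdg (b.coord 0) (b.coord 3) - wdg (b.coord 1) (b.coord 2))

lemma frm_apply {V : Type*} [AddCommGroup V] [Module ℝ V] (b : Module.Basis (Fin 4) ℝ V)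
    (A B C D : ℝ) (x y : V) : frm b A B C D ![x, y] =
    A * (b.coord 0 x * b.coord 1 y - b.coord 0 y * b.coord 1 x)
    + B * (b.coord 2 x * b.coord 3 y - b.coord 2 y * b.coord 3 x)
    + C * ((b.coord 0 x * b.coord 2 y - b.coord 0 y * b.coord 2 x)
      + (b.coord 1 x * b.coord 3 y - b.coord 1 y * b.coord 3 x))
    + D * ((b.coord 0 x * b.coord 3 y - b.coord 0 y * b.coord 3 x)
      - (b.coord 1 x * b.coord 2 y - b.coord 1 y * b.coord 2 x)) := by
  simp only [frm, AlternatingMap.add_apply, AlternatingMap.smul_apply, AlternatingMap.sub_apply,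
    wdg_apply, smul_eq_mul]

lemma frm_invariant {V : Type*} [AddCommGroup V] [Module ℝ V] (b : Module.Basis (Fin 4) ℝ V)
    (J : V →ₗ[ℝ] V) (h0 : J (b 0) = b 1) (h1 : J (b 1) = - b 0) (h2 : J (b 2) = b 3)
    (h3 : J (b 3) = - b 2) (A B C D : ℝ) (x y : V) :
    frm b A B C D ![J x, J y] = frm b A B C D ![x, y] := by
  have c0 : b.coord 0 ∘ₗ J = - b.coord 1 := by
    apply b.ext; intro i; fin_cases i <;> simp [h0, h1, h2, h3, Finsupp.single_apply]
  have c1 : b.coord 1 ∘ₗ J = b.coord 0 := by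
    apply b.ext; intro i; fin_cases i <;> simp [h0, h1, h2, h3, Finsupp.single_apply]
  have c2 : b.coord 2 ∘ₗ J = - b.coord 3 := by
    apply b.ext; intro i; fin_cases i <;> simp [h0, h1, h2, h3, Finsupp.single_apply]
  have c3 : b.coord 3 ∘ₗ J = b.coord 2 := by
    apply b.ext; intro i; fin_cases i <;> simp [h0, h1, h2, h3, Finsupp.single_apply]
  have d0 : ∀ z, b.coord 0 (J z) = - b.coord 1 z := fun z => LinearMap.congr_fun c0 z
  have d1 : ∀ z, b.coord 1 (J z) = b.coord 0 z := fun z => LinearMap.congr_fun c1 z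
  have d2 : ∀ z, b.coord 2 (J z) = - b.coord 3 z := fun z => LinearMap.congr_fun c2 z
  have d3 : ∀ z, b.coord 3 (J z) = b.coord 2 z := fun z => LinearMap.congr_fun c3 z
  simp only [frm_apply, d0, d1, d2, d3]
  ring

lemma eq_frm {V : Type*} [AddCommGroup V] [Module ℝ V] (b : Module.Basis (Fin 4) ℝ V)
    (J : V →ₗ[ℝ] V) (h0 : J (b 0) = b 1) (h1 : J (b 1) = - b 0) (h2 : J (b 2) = b 3)
    (h3 : J (b 3) = - b 2) (α : AlternatingMap ℝ V ℝ (Fin 2))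
    (hα : ∀ x y : V, α ![J x, J y] = α ![x, y]) :
    α = frm b (α ![b 0, b 1]) (α ![b 2, b 3]) (α ![b 0, b 2]) (α ![b 0, b 3]) := by
  have e13 : α ![b 1, b 3] = α ![b 0, b 2] := by rw [← hα (b 0) (b 2), h0, h2]
  have e12 : α ![b 1, b 2] = - α ![b 0, b 3] := by
    rw [← hα (b 0) (b 3), h0, h3, alt_neg_right, neg_neg]
  apply b.ext_alternating
  intro v _
  have hv : (fun i => b (v i)) = ![b (v 0), b (v 1)] := by
    ext i; fin_cases i <;> rfl
  rw [hv, frm_apply]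
  generalize v 0 = i
  generalize v 1 = j
  have s := alt_self α
  have a10 := alt_add α (b 1) (b 0)
  have a20 := alt_add α (b 2) (b 0)
  have a30 := alt_add α (b 3) (b 0)
  have a21 := alt_add α (b 2) (b 1)
  have a31 := alt_add α (b 3) (b 1)
  have a32 := alt_add α (b 3) (b 2)
  fin_cases i <;> fin_cases j <;> simp [Finsupp.single_apply, s, e13, e12] <;> linarith

lemma G_frm {V : Type*} [AddCommGroup V] [Module ℝ V] (b : Module.Basis (Fin 4) ℝ V)
    (ν : AlternatingMap ℝ V ℝ (Fin 4))
    (G : AlternatingMap ℝ V ℝ (Fin 2) → AlternatingMap ℝ V ℝ (Fin 2) → ℝ)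
    (hG : ∀ (α β : AlternatingMap ℝ V ℝ (Fin 2)) (x : Fin 4 → V),
      α ![x 0, x 1] * β ![x 2, x 3] - α ![x 0, x 2] * β ![x 1, x 3]
        + α ![x 0, x 3] * β ![x 1, x 2] + α ![x 2, x 3] * β ![x 0, x 1]
        - α ![x 1, x 3] * β ![x 0, x 2] + α ![x 1, x 2] * β ![x 0, x 3]
      = G α β * ν x) (A B C D A' B' C' D' : ℝ) :
    G (frm b A B C D) (frm b A' B' C' D') * ν b
      = A * B' + B * A' - 2 * C * C' - 2 * D * D' := by
  rw [← hG]
  simp [frm_apply, Finsupp.single_apply]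
  ring

/-- Let `V` be a 4-dimensional real vector space, `J` a complex structure
on `V`, `ν` a fixed nonzero alternating 4-linear form on `V`, and `G` the pairing on
alternating bilinear forms induced by the wedge product (`α ∧ β = G α β • ν`, the wedge
being given by the shuffle sum).  Then the set of `J`-invariant alternating bilinear forms
is a 4-dimensional subspace, `G` restricts to a symmetric bilinear form on it, and this
restriction is nondegenerate of Lorentz signature. -/
theorem chern_moser_stmt_0
    (V : Type*) [AddCommGroup V] [Module ℝ V]
    (hdim : Module.finrank ℝ V = 4)
    (J : V →ₗ[ℝ] V) (hJ : ∀ v : V, J (J v) = -v)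
    (ν : AlternatingMap ℝ V ℝ (Fin 4)) (hν : ν ≠ 0)
    (G : AlternatingMap ℝ V ℝ (Fin 2) → AlternatingMap ℝ V ℝ (Fin 2) → ℝ)
    (hG : ∀ (α β : AlternatingMap ℝ V ℝ (Fin 2)) (x : Fin 4 → V),
      α ![x 0, x 1] * β ![x 2, x 3] - α ![x 0, x 2] * β ![x 1, x 3]
        + α ![x 0, x 3] * β ![x 1, x 2] + α ![x 2, x 3] * β ![x 0, x 1]
        - α ![x 1, x 3] * β ![x 0, x 2] + α ![x 1, x 2] * β ![x 0, x 3]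
      = G α β * ν x) :
    ∃ W : Submodule ℝ (AlternatingMap ℝ V ℝ (Fin 2)),
      -- (i) the J-invariant alternating bilinear forms are a 4-dimensional subspace
      (W : Set (AlternatingMap ℝ V ℝ (Fin 2)))
          = {α | ∀ x y : V, α ![J x, J y] = α ![x, y]} ∧
      Module.finrank ℝ W = 4 ∧
      -- (ii) G restricts to a symmetric bilinear form on W
      (∀ α ∈ W, ∀ β ∈ W, G α β = G β α) ∧
      -- (iii) Lorentz signature
      ∃ (ξ : Fin 4 → AlternatingMap ℝ V ℝ (Fin 2)) (ε : ℝ),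
        (ε = 1 ∨ ε = -1) ∧
        (∀ i, ξ i ∈ W) ∧
        LinearIndependent ℝ ξ ∧
        Submodule.span ℝ (Set.range ξ) = W ∧
        G (ξ 0) (ξ 0) = ε ∧
        (∀ k : Fin 4, k ≠ 0 → G (ξ k) (ξ k) = -ε) ∧
        (∀ a b : Fin 4, a ≠ b → G (ξ a) (ξ b) = 0) := by
  obtain ⟨b, h0, h1, h2, h3⟩ := exists_adapted_basis hdim J hJ
  have hl : ν b ≠ 0 := (AlternatingMap.map_basis_ne_zero_iff b ν).2 hν
  have hGf := G_frm b ν G hG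
  set l := ν b with hldef
  set s := Real.sqrt (|l| / 2) with hs
  have hs2 : s * s = |l| / 2 := Real.mul_self_sqrt (by positivity)
  have hs0 : s ≠ 0 := by
    have : 0 < s := Real.sqrt_pos.2 (by positivity)
    exact this.ne'
  let W : Submodule ℝ (AlternatingMap ℝ V ℝ (Fin 2)) :=
    { carrier := {α | ∀ x y : V, α ![J x, J y] = α ![x, y]}
      add_mem' := by
        intro α β ha hb x y
        simp only [AlternatingMap.add_apply, ha x y, hb x y]
      zero_mem' := by intro x y; simp
      smul_mem' := by
        intro c α ha x y
        simp only [AlternatingMap.smul_apply, ha x y] }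
  let ξ : Fin 4 → AlternatingMap ℝ V ℝ (Fin 2) :=
    ![frm b s s 0 0, frm b s (-s) 0 0, frm b 0 0 s 0, frm b 0 0 0 s]
  have hξW : ∀ i, ξ i ∈ W := by
    intro i
    fin_cases i <;> exact frm_invariant b J h0 h1 h2 h3 _ _ _ _
  have hsum : ∀ g : Fin 4 → ℝ, ∑ i, g i • ξ i =
      frm b (s * (g 0 + g 1)) (s * (g 0 - g 1)) (s * g 2) (s * g 3) := by
    intro g
    simp only [Fin.sum_univ_four, ξ, Matrix.cons_val, frm]
    module
  have hli : LinearIndependent ℝ ξ := by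
    rw [Fintype.linearIndependent_iff]
    intro g hg
    rw [hsum] at hg
    have e01 := congrArg (fun α => α ![b 0, b 1]) hg
    have e23 := congrArg (fun α => α ![b 2, b 3]) hg
    have e02 := congrArg (fun α => α ![b 0, b 2]) hg
    have e03 := congrArg (fun α => α ![b 0, b 3]) hg
    simp [frm_apply, Finsupp.single_apply, hs0] at e01 e23 e02 e03
    intro i
    fin_cases i
    · show g 0 = 0
      linarith
    · show g 1 = 0
      linarith
    · exact e02
    · exact e03
  have hspan : Submodule.span ℝ (Set.range ξ) = W := by
    apply le_antisymm
    · rw [Submodule.span_le]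
      rintro _ ⟨i, rfl⟩
      exact hξW i
    · intro α hα
      have h := eq_frm b J h0 h1 h2 h3 α hα
      generalize α ![b 0, b 1] = A at h
      generalize α ![b 2, b 3] = B at h
      generalize α ![b 0, b 2] = C at h
      generalize α ![b 0, b 3] = D at h
      have h' : α = ∑ i, (![(A + B) / (2 * s), (A - B) / (2 * s), C / s, D / s] : Fin 4 → ℝ) i
          • ξ i := by
        rw [hsum, h]
        simp only [Matrix.cons_val]
        congr 1 <;> field_simp <;> ring
      rw [h']
      exact Submodule.sum_mem _ fun i _ =>
        Submodule.smul_mem _ _ (Submodule.subset_span ⟨i, rfl⟩)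
  have hε : |l| / l * l = |l| := div_mul_cancel₀ _ hl
  refine ⟨W, rfl, ?_, ?_, ξ, |l| / l, ?_, hξW, hli, hspan, ?_, ?_, ?_⟩
  · rw [← hspan, finrank_span_eq_card hli]
    simp
  · intro α _ β _
    apply mul_right_cancel₀ hl
    rw [hldef, ← hG, ← hG]
    ring
  · rcases abs_choice l with h | h <;> rw [h]
    · left; exact div_self hl
    · right; rw [neg_div, div_self hl]
  · apply mul_right_cancel₀ hl
    rw [hε]
    refine (hGf _ _ _ _ _ _ _ _).trans ?_
    linarith
  · intro k hk
    apply mul_right_cancel₀ hl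
    rw [neg_mul, hε]
    fin_cases k
    · exact absurd rfl hk
    all_goals
      refine (hGf _ _ _ _ _ _ _ _).trans ?_
      linarith
  · intro i j hij
    apply mul_right_cancel₀ hl
    rw [zero_mul]
    fin_cases i <;> fin_cases j <;>
      first
      | exact absurd rfl hij
      | (refine (hGf _ _ _ _ _ _ _ _).trans ?_
         ring)
end

section
/- Every nondegenerate pair (H¹, H²) of Hermitian 2×2 complex matrices is equivalent to exactly one of the three model pairs (elliptic, parabolic, hyperbolic); moreover, no two distinct model pairs are equivalent to each other. (This is the algebraic content of Proposition 2.5: the osculating quadric {(z, w) ∈ ℂ⁴ : Im w₁ = zᴴ H¹ z, Im w₂ = zᴴ H² z} of a Levi non-degenerate, integrable CR manifold of dimension six and codimension two is, up to equivalence, exactly one of the three quadrics Im w₁ = Im(z₁ z̄₂), Im w₂ = Re(z₁ z̄₂); Im w₁ = |z₁|², Im w₂ = Re(z₁ z̄₂); Im w₁ = |z₁|², Im w₂ = |z₂|².) -/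
noncomputable section

/-- Equivalence of pairs of Hermitian `2×2` matrices: `(H¹,H²) ∼ (K¹,K²)` iff there are
`A ∈ GL₂(ℂ)` and `B ∈ GL₂(ℝ)` with `Kᵃ = Σ_b B_{ab} (Aᴴ Hᵇ A)`. -/
def PairEquiv (P Q : Matrix (Fin 2) (Fin 2) ℂ × Matrix (Fin 2) (Fin 2) ℂ) : Prop :=
  ∃ (A : Matrix (Fin 2) (Fin 2) ℂ) (B : Matrix (Fin 2) (Fin 2) ℝ),
    IsUnit A.det ∧ IsUnit B.det ∧
    Q.1 = B 0 0 • (A.conjTranspose * P.1 * A) + B 0 1 • (A.conjTranspose * P.2 * A) ∧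
    Q.2 = B 1 0 • (A.conjTranspose * P.1 * A) + B 1 1 • (A.conjTranspose * P.2 * A)

/-- The three model pairs: elliptic (`Im(z₁ z̄₂)`, `Re(z₁ z̄₂)`), parabolic
(`|z₁|²`, `Re(z₁ z̄₂)`) and hyperbolic (`|z₁|²`, `|z₂|²`). -/
def ModelPair : Fin 3 → Matrix (Fin 2) (Fin 2) ℂ × Matrix (Fin 2) (Fin 2) ℂ :=
  ![(!![0, Complex.I/2; -Complex.I/2, 0], !![0, 1/2; 1/2, 0]),
    (!![1, 0; 0, 0], !![0, 1/2; 1/2, 0]),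
    (!![1, 0; 0, 0], !![0, 0; 0, 1])]


abbrev CM := Matrix (Fin 2) (Fin 2) ℂ

/-- discriminant of the pencil determinant -/
def pdisc (P : CM × CM) : ℂ :=
  ((P.1 + P.2).det - P.1.det - P.2.det) ^ 2 - 4 * P.1.det * P.2.det

lemma pdisc_equiv {P Q : CM × CM} (h : PairEquiv P Q) :
    ∃ t : ℝ, 0 < t ∧ pdisc Q = t * pdisc P := by
  obtain ⟨A, B, hA, hB, h1, h2⟩ := h
  refine ⟨(Complex.normSq A.det) ^ 2 * B.det ^ 2, ?_, ?_⟩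
  · have := Complex.normSq_pos.2 hA.ne_zero
    have := hB.ne_zero
    positivity
  · obtain ⟨P1, P2⟩ := P
    push_cast
    rw [Complex.normSq_eq_conj_mul_self]
    simp only [pdisc, h1, h2]
    simp only [Matrix.det_fin_two, Matrix.add_apply, Matrix.smul_apply, Matrix.mul_apply,
      Fin.sum_univ_two, Matrix.conjTranspose_apply, Complex.real_smul, map_sub, map_mul,
      Complex.star_def]
    push_cast
    ring

lemma pdisc_model (i : Fin 3) : pdisc (ModelPair i) = (![-1/4, 0, 1] : Fin 3 → ℝ) i := by
  fin_cases i
  · simp [pdisc, ModelPair, Matrix.det_fin_two]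
    ring_nf
    simp
    ring
  · simp [pdisc, ModelPair, Matrix.det_fin_two]
  · simp [pdisc, ModelPair, Matrix.det_fin_two]

lemma model_unique {P : CM × CM} {i j : Fin 3} (hi : PairEquiv P (ModelPair i))
    (hj : PairEquiv P (ModelPair j)) : i = j := by
  obtain ⟨t, ht, h1⟩ := pdisc_equiv hi
  obtain ⟨s, hs, h2⟩ := pdisc_equiv hj
  rw [pdisc_model] at h1 h2
  have h3 : (s : ℂ) * ((![-1/4, 0, 1] : Fin 3 → ℝ) i : ℝ) =
      t * ((![-1/4, 0, 1] : Fin 3 → ℝ) j : ℝ) := by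
    rw [h1, h2]; ring
  have h4 : s * ((![-1/4, 0, 1] : Fin 3 → ℝ) i : ℝ) =
      t * ((![-1/4, 0, 1] : Fin 3 → ℝ) j : ℝ) := by exact_mod_cast h3
  fin_cases i <;> fin_cases j <;> simp at h4 ⊢ <;> linarith

lemma PairEquiv.refl (P : CM × CM) : PairEquiv P P :=
  ⟨1, 1, by simp, by simp, by simp, by simp⟩

lemma PairEquiv.trans {P Q R : CM × CM} (h : PairEquiv P Q) (h' : PairEquiv Q R) :
    PairEquiv P R := by
  obtain ⟨A, B, hA, hB, h1, h2⟩ := h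
  obtain ⟨A', B', hA', hB', h1', h2'⟩ := h'
  refine ⟨A * A', B' * B, ?_, ?_, ?_, ?_⟩
  · rw [Matrix.det_mul]; exact hA.mul hA'
  · rw [Matrix.det_mul]; exact hB'.mul hB
  · rw [h1', h1, h2]
    simp only [Matrix.mul_apply, Fin.sum_univ_two, Matrix.conjTranspose_mul, Matrix.mul_add,
      Matrix.add_mul, Matrix.mul_smul, Matrix.smul_mul, Matrix.mul_assoc]
    module
  · rw [h2', h1, h2]
    simp only [Matrix.mul_apply, Fin.sum_univ_two, Matrix.conjTranspose_mul, Matrix.mul_add,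
      Matrix.add_mul, Matrix.mul_smul, Matrix.smul_mul, Matrix.mul_assoc]
    module

def Indep (P : CM × CM) : Prop := ∀ x y : ℝ, x • P.1 + y • P.2 = 0 → x = 0 ∧ y = 0

lemma Indep.equiv {P Q : CM × CM} (hP : Indep P) (h : PairEquiv P Q) : Indep Q := by
  obtain ⟨A, B, hA, hB, h1, h2⟩ := h
  intro x y hxy
  have e : A.conjTranspose * ((x * B 0 0 + y * B 1 0) • P.1 + (x * B 0 1 + y * B 1 1) • P.2) * A
      = 0 := by
    rw [← hxy, h1, h2]
    simp only [Matrix.mul_add, Matrix.add_mul, Matrix.mul_smul, Matrix.smul_mul]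
    module
  have hA1 : IsUnit A := (Matrix.isUnit_iff_isUnit_det A).2 hA
  have hA2 : IsUnit A.conjTranspose := hA1.star
  have e2 := (hA2.mul_right_eq_zero).1 ((hA1.mul_left_eq_zero).1 e)
  obtain ⟨e3, e4⟩ := hP _ _ e2
  have hd := hB.ne_zero
  rw [Matrix.det_fin_two] at hd
  constructor
  · apply (mul_eq_zero.1 (?_ : x * (B 0 0 * B 1 1 - B 0 1 * B 1 0) = 0)).resolve_right hd
    linear_combination B 1 1 * e3 - B 1 0 * e4
  · apply (mul_eq_zero.1 (?_ : y * (B 0 0 * B 1 1 - B 0 1 * B 1 0) = 0)).resolve_right hd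
    linear_combination B 0 0 * e4 - B 0 1 * e3

/-- Hermitian matrix with given entries -/
def HM (p : ℝ) (q : ℂ) (r : ℝ) : CM := !![(p : ℂ), q; star q, (r : ℂ)]

lemma exists_HM {H : CM} (h : H.IsHermitian) : ∃ p q r, H = HM p q r := by
  refine ⟨(H 0 0).re, H 0 1, (H 1 1).re, ?_⟩
  have h0 := h.apply 0 0
  have h1 := h.apply 1 1
  have h2 := h.apply 1 0
  ext i j
  fin_cases i <;> fin_cases j
  · simpa [HM] using (Complex.conj_eq_iff_re.1 h0).symm
  · simp [HM]
  · simpa [HM] using h2.symm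
  · simpa [HM] using (Complex.conj_eq_iff_re.1 h1).symm

lemma HM_herm (p : ℝ) (q : ℂ) (r : ℝ) : (HM p q r).IsHermitian := by
  ext i j
  fin_cases i <;> fin_cases j <;> simp [HM]

lemma HM_comb (x y p r p' r' : ℝ) (q q' : ℂ) : x • HM p q r + y • HM p' q' r' =
    HM (x * p + y * p') (x * q + y * q') (x * r + y * r') := by
  ext i j
  fin_cases i <;> fin_cases j <;> simp [HM]

/-- Explicit congruence of a Hermitian matrix. -/
lemma HM_congr (p r : ℝ) (q a b c d : ℂ) :
    (!![a, b; c, d] : CM).conjTranspose * HM p q r * !![a, b; c, d] =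
    HM (p * Complex.normSq a + 2 * (star a * q * c).re + r * Complex.normSq c)
      (star a * p * b + star a * q * d + star c * star q * b + star c * r * d)
      (p * Complex.normSq b + 2 * (star b * q * d).re + r * Complex.normSq d) := by
  ext i j
  fin_cases i <;> fin_cases j <;>
    simp [HM, Matrix.mul_apply, Fin.sum_univ_two, Complex.ext_iff, Complex.normSq_apply] <;>
    constructor <;> ring

/-- Step lemma. -/
lemma step (a b c d : ℂ) (x y z w : ℝ) (hA : a * d - b * c ≠ 0) (hB : x * w - y * z ≠ 0)
    (p r p' r' : ℝ) (q q' : ℂ) :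
    PairEquiv (HM p q r, HM p' q' r')
     (x • ((!![a, b; c, d] : CM).conjTranspose * HM p q r * !![a, b; c, d]) +
      y • ((!![a, b; c, d] : CM).conjTranspose * HM p' q' r' * !![a, b; c, d]),
      z • ((!![a, b; c, d] : CM).conjTranspose * HM p q r * !![a, b; c, d]) +
      w • ((!![a, b; c, d] : CM).conjTranspose * HM p' q' r' * !![a, b; c, d])) :=
  ⟨!![a, b; c, d], !![x, y; z, w], by simpa [Matrix.det_fin_two] using hA,
    by simpa [Matrix.det_fin_two] using hB, by simp, by simp⟩

/-- Step lemma with explicit target. -/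
lemma step' (a b c d : ℂ) (x y z w : ℝ) (hA : a * d - b * c ≠ 0) (hB : x * w - y * z ≠ 0)
    {p r p' r' : ℝ} {q q' : ℂ} (Q : CM × CM)
    (h1 : Q.1 = x • ((!![a, b; c, d] : CM).conjTranspose * HM p q r * !![a, b; c, d]) +
      y • ((!![a, b; c, d] : CM).conjTranspose * HM p' q' r' * !![a, b; c, d]))
    (h2 : Q.2 = z • ((!![a, b; c, d] : CM).conjTranspose * HM p q r * !![a, b; c, d]) +
      w • ((!![a, b; c, d] : CM).conjTranspose * HM p' q' r' * !![a, b; c, d])) :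
    PairEquiv (HM p q r, HM p' q' r') Q := by
  have := step a b c d x y z w hA hB p r p' r' q q'
  rwa [← h1, ← h2] at this

def Reach (P : CM × CM) : Prop := ∃ i, PairEquiv P (ModelPair i)

lemma Reach.of {P Q : CM × CM} (h : PairEquiv P Q) (hQ : Reach Q) : Reach P := by
  obtain ⟨i, hi⟩ := hQ
  exact ⟨i, h.trans hi⟩

lemma model0 : ModelPair 0 = (HM 0 (Complex.I / 2) 0, HM 0 (1/2) 0) := by
  simp [ModelPair, HM]
lemma model1 : ModelPair 1 = (HM 1 0 0, HM 0 (1/2) 0) := by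
  simp [ModelPair, HM]
lemma model2 : ModelPair 2 = (HM 1 0 0, HM 0 0 1) := by
  simp [ModelPair, HM]

lemma HM_ext {p r p' r' : ℝ} {q q' : ℂ} (h1 : p = p') (h2 : q = q') (h3 : r = r') :
    HM p q r = HM p' q' r' := by rw [h1, h2, h3]

lemma reach_diag (s : ℝ) : Reach (HM 0 Complex.I 0, HM 1 0 s) := by
  rcases lt_trichotomy s 0 with hs | hs | hs
  · obtain ⟨σ, hσ, rfl⟩ : ∃ σ : ℝ, 0 < σ ∧ s = -σ ^ 2 :=
      ⟨√(-s), Real.sqrt_pos.2 (by linarith), by rw [Real.sq_sqrt (by linarith)]; ring⟩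
    have hc : (σ : ℂ) ≠ 0 := by exact_mod_cast hσ.ne'
    refine ⟨0, step' σ σ 1 (-1) (-1/(4*σ)) 0 0 (1/(4*σ^2)) ?_ ?_ _ ?_ ?_⟩
    · intro h; apply hc; linear_combination (-1/2) * h
    · have : -1/(4*σ) * (1/(4*σ^2)) ≠ 0 := by
        have := hσ.ne'
        apply mul_ne_zero <;> apply div_ne_zero <;> simp [this]
      simpa using this
    · rw [model0, HM_congr, HM_congr, HM_comb]
      apply HM_ext
      · simp
      · simp; field_simp; ring
      · simp
    · rw [model0, HM_congr, HM_congr, HM_comb]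
      apply HM_ext
      · simp [Complex.normSq_apply]; right; ring
      · simp; field_simp; ring
      · simp [Complex.normSq_apply]; right; ring
  · subst hs
    refine ⟨1, step' 1 0 0 (-Complex.I/2) 0 1 1 0 ?_ ?_ _ ?_ ?_⟩
    · simp
    · simp
    · rw [model1, HM_congr, HM_congr, HM_comb]
      apply HM_ext <;> simp
    · rw [model1, HM_congr, HM_congr, HM_comb]
      apply HM_ext
      · simp
      · simp; linear_combination (1/2) * Complex.I_sq
      · simp
  · obtain ⟨σ, hσ, rfl⟩ : ∃ σ : ℝ, 0 < σ ∧ s = σ ^ 2 :=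
      ⟨√s, Real.sqrt_pos.2 hs, by rw [Real.sq_sqrt hs.le]⟩
    have hc : (σ : ℂ) ≠ 0 := by exact_mod_cast hσ.ne'
    have hr := hσ.ne'
    have hr := hσ.ne'
    obtain ⟨τ, hτ⟩ : ∃ τ : ℝ, σ * τ = 1/2 := ⟨1/(2*σ), by field_simp⟩
    have hτ2 : σ ^ 2 * τ ^ 2 = 1/4 := by rw [← mul_pow, hτ]; norm_num
    have hτ0 : τ ≠ 0 := by rintro rfl; norm_num at hτ
    have hτc : (τ : ℂ) ≠ 0 := by exact_mod_cast hτ0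
    refine ⟨2, step' ((1/2 : ℝ) : ℂ) ((1/2 : ℝ) : ℂ) ((-τ : ℝ) * Complex.I)
      ((τ : ℝ) * Complex.I) σ 1 (-σ) 1 ?_ ?_ _ ?_ ?_⟩
    · have : (τ : ℂ) * Complex.I ≠ 0 := by simp [hτc]
      convert this using 1
      push_cast; ring
    · intro h; apply hr; linarith
    · rw [model2, HM_congr, HM_congr, HM_comb]
      apply HM_ext
      · simp [Complex.normSq_apply]; grind
      · simp [Complex.ext_iff, pow_two]; grind
      · simp [Complex.normSq_apply]; grind
    · rw [model2, HM_congr, HM_congr, HM_comb]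
      apply HM_ext
      · simp [Complex.normSq_apply]; grind
      · simp [Complex.ext_iff, pow_two]; grind
      · simp [Complex.normSq_apply]; grind

lemma reach_real_p (p q r : ℝ) (hp : p ≠ 0) : Reach (HM 0 Complex.I 0, HM p (q : ℂ) r) := by
  refine Reach.of (step' 1 ((-q/p : ℝ) : ℂ) 0 1 1 0 0 (1/p) ?_ ?_
    (HM 0 Complex.I 0, HM 1 0 (r/p - q^2/p^2)) ?_ ?_) (reach_diag _)
  · simp
  · simp [hp]
  · simp only []
    rw [HM_congr, HM_congr, HM_comb]
    apply HM_ext <;> simp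
  · simp only []
    rw [HM_congr, HM_congr, HM_comb]
    have : (p : ℂ) ≠ 0 := by exact_mod_cast hp
    apply HM_ext
    · simp [hp]
    · simp; field_simp; simp
    · simp [Complex.normSq_apply]; field_simp; ring

lemma reach_real (p q r : ℝ) (h : ¬ (p = 0 ∧ q = 0 ∧ r = 0)) :
    Reach (HM 0 Complex.I 0, HM p (q : ℂ) r) := by
  by_cases hp : p = 0
  · by_cases hr : r = 0
    · have hq : q ≠ 0 := fun hq => h ⟨hp, hq, hr⟩
      have hqc : (q : ℂ) ≠ 0 := by exact_mod_cast hq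
      subst hp hr
      refine ⟨0, step' 1 0 0 1 (1/2) 0 0 (1/(2*q)) ?_ ?_ _ ?_ ?_⟩
      · simp
      · simp [hq]
      · rw [model0, HM_congr, HM_congr, HM_comb]
        apply HM_ext <;> simp
        ring
      · rw [model0, HM_congr, HM_congr, HM_comb]
        apply HM_ext <;> simp
        field_simp
    · refine Reach.of (step' 0 1 1 0 (-1) 0 0 1 ?_ ?_
        (HM 0 Complex.I 0, HM r q p) ?_ ?_) (reach_real_p _ _ _ hr)
      · simp
      · simp
      · simp only []
        rw [HM_congr, HM_congr, HM_comb]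
        apply HM_ext <;> simp
      · simp only []
        rw [HM_congr, HM_congr, HM_comb]
        apply HM_ext <;> simp
  · exact reach_real_p _ _ _ hp

lemma reach_I (K : CM) (hK : K.IsHermitian)
    (hI : Indep (HM 0 Complex.I 0, K)) : Reach (HM 0 Complex.I 0, K) := by
  obtain ⟨p, q, r, rfl⟩ := exists_HM hK
  have hs : PairEquiv (HM 0 Complex.I 0, HM p q r) (HM 0 Complex.I 0, HM p (q.re : ℂ) r) := by
    refine step' 1 0 0 1 1 0 (-q.im) 1 ?_ ?_ _ ?_ ?_
    · simp
    · simp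
    · simp only []
      rw [HM_congr, HM_congr, HM_comb]
      apply HM_ext <;> simp
    · simp only []
      rw [HM_congr, HM_congr, HM_comb]
      apply HM_ext <;> simp [Complex.ext_iff]
  refine Reach.of hs (reach_real _ _ _ ?_)
  rintro ⟨h1, h2, h3⟩
  have := (hI.equiv hs 0 1 (by simp [h1, h2, h3, HM, ← Matrix.ext_iff, Fin.forall_fin_two])).2
  norm_num at this

lemma reach_q (q : ℂ) (r : ℝ) (hq : q ≠ 0) (K : CM) (hK : K.IsHermitian)
    (hI : Indep (HM 0 q r, K)) : Reach (HM 0 q r, K) := by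
  have hn : Complex.normSq q ≠ 0 := by simpa using hq
  have hs : PairEquiv (HM 0 q r, K) (HM 0 Complex.I 0,
      (!![1, ((-r/(2*Complex.normSq q) : ℝ) : ℂ) * Complex.I; 0, Complex.I / q] : CM).conjTranspose
        * K * !![1, ((-r/(2*Complex.normSq q) : ℝ) : ℂ) * Complex.I; 0, Complex.I / q]) := by
    refine ⟨_, 1, ?_, by simp, ?_, by simp; rfl⟩
    · simp [Matrix.det_fin_two, hq]
    · simp only [HM_congr]
      have e1 : q * (Complex.I / q) = Complex.I := by field_simp
      simp only [mul_assoc, e1]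
      simp
      apply HM_ext
      · simp
      · rfl
      · have e2 : (-(r : ℂ) / (2 * (Complex.normSq q : ℂ))) =
            ((-r / (2 * Complex.normSq q) : ℝ) : ℂ) := by push_cast; rfl
        rw [e2, Complex.ofReal_re]
        field_simp
        ring
  exact Reach.of hs (reach_I _ (Matrix.isHermitian_conjTranspose_mul_mul _ hK) (hI.equiv hs))

lemma reach_01 (p : ℝ) (q : ℂ) (h : ¬ (p = 0 ∧ q = 0)) : Reach (HM 0 0 1, HM p q 0) := by
  by_cases hp : p = 0
  · have hq : q ≠ 0 := fun hq => h ⟨hp, hq⟩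
    subst hp
    refine ⟨1, step' 0 (star (1/(2*q))) 1 0 1 0 0 1 ?_ ?_ _ ?_ ?_⟩
    · simp [hq]
    · simp
    · rw [model1, HM_congr, HM_congr, HM_comb]
      apply HM_ext <;> simp
    · rw [model1, HM_congr, HM_congr, HM_comb]
      have : (starRingEnd ℂ) q ≠ 0 := by simpa using hq
      apply HM_ext <;> simp
      field_simp
  · have hpc : (p : ℂ) ≠ 0 := by exact_mod_cast hp
    refine ⟨2, step' 1 (-q * ((1/p : ℝ) : ℂ)) 0 1 (Complex.normSq q / p^2) (1/p) 1 0 ?_ ?_ _ ?_ ?_⟩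
    · simp
    · simp [hp]
    · rw [model2, HM_congr, HM_congr, HM_comb]
      apply HM_ext
      · simp [hp]
      · simp; field_simp; simp
      · simp [Complex.normSq_apply]; field_simp; ring
    · rw [model2, HM_congr, HM_congr, HM_comb]
      apply HM_ext <;> simp

lemma reach_r (r : ℝ) (K : CM) (hK : K.IsHermitian)
    (hI : Indep (HM 0 0 r, K)) : Reach (HM 0 0 r, K) := by
  obtain ⟨p, q, r', rfl⟩ := exists_HM hK
  have hr : r ≠ 0 := by
    rintro rfl
    have := (hI 1 0 (by simp [HM, ← Matrix.ext_iff, Fin.forall_fin_two])).1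
    norm_num at this
  have hs : PairEquiv (HM 0 0 r, HM p q r') (HM 0 0 1, HM p q 0) := by
    refine step' 1 0 0 1 (1/r) 0 (-r'/r) 1 ?_ ?_ _ ?_ ?_
    · simp
    · simp [hr]
    · simp only []
      rw [HM_congr, HM_congr, HM_comb]
      apply HM_ext <;> simp [hr]
    · simp only []
      rw [HM_congr, HM_congr, HM_comb]
      apply HM_ext <;> simp [hr]
  refine Reach.of hs (reach_01 _ _ ?_)
  rintro ⟨h1, h2⟩
  have := (hI.equiv hs 0 1 (by simp [h1, h2, HM, ← Matrix.ext_iff, Fin.forall_fin_two])).2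
  norm_num at this

lemma reach_0 (q : ℂ) (r : ℝ) (K : CM) (hK : K.IsHermitian)
    (hI : Indep (HM 0 q r, K)) : Reach (HM 0 q r, K) := by
  by_cases hq : q = 0
  · subst hq; exact reach_r r K hK hI
  · exact reach_q q r hq K hK hI

lemma reach_all (H1 H2 : CM) (h1 : H1.IsHermitian) (h2 : H2.IsHermitian)
    (hI : Indep (H1, H2)) : Reach (H1, H2) := by
  obtain ⟨p, q, r, rfl⟩ := exists_HM h1
  obtain ⟨p', q', r', rfl⟩ := exists_HM h2
  by_cases hp : p = 0
  · subst hp; exact reach_0 _ _ _ h2 hI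
  · have hs : PairEquiv (HM p q r, HM p' q' r')
        (HM 0 (p' * q - p * q') (p' * r - p * r'), 
         HM (p * p + p' * p') (p * q + p' * q') (p * r + p' * r')) := by
      refine step' 1 0 0 1 p' (-p) p p' ?_ ?_ _ ?_ ?_
      · simp
      · have : 0 < p ^ 2 := by positivity
        nlinarith [sq_nonneg p']
      · simp only []
        rw [HM_congr, HM_congr, HM_comb]
        apply HM_ext <;> simp <;> ring
      · simp only []
        rw [HM_congr, HM_congr, HM_comb]
        apply HM_ext <;> simp
    exact Reach.of hs (reach_0 _ _ _ (HM_herm _ _ _) (hI.equiv hs))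

/-- Every nondegenerate pair of Hermitian `2×2` complex matrices is
equivalent to exactly one of the three model pairs (elliptic, parabolic, hyperbolic);
moreover no two distinct model pairs are equivalent.  (Algebraic content of
Proposition 2.5 on osculating quadrics.) -/
theorem chern_moser_stmt_7 :
    (∀ H1 H2 : Matrix (Fin 2) (Fin 2) ℂ, H1.IsHermitian → H2.IsHermitian →
      LinearIndependent ℝ ![H1, H2] →
      (∀ z : Fin 2 → ℂ, H1.mulVec z = 0 → H2.mulVec z = 0 → z = 0) →
      ∃! i : Fin 3, PairEquiv (H1, H2) (ModelPair i)) ∧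
    (∀ i j : Fin 3, i ≠ j → ¬ PairEquiv (ModelPair i) (ModelPair j)) := by
  refine ⟨fun H1 H2 h1 h2 hI _ => ?_, fun i j hij h => hij (model_unique (PairEquiv.refl _) h)⟩
  obtain ⟨i, hi⟩ := reach_all H1 H2 h1 h2 (fun x y h => LinearIndependent.pair_iff.1 hI x y h)
  exact ⟨i, hi, fun j hj => model_unique hj hi⟩
end
end

section
/- (The key computation of §5.2, formulas (5.8)–(5.10).) Suppose σ, τ ∈ ℂ and Φ is the 2-form Φ = −E⁰₀ ∧ Ω + Ē¹ ∧ E² + σ E¹ ∧ Ω̄ + τ Ē² ∧ Ω̄. Let Cⁱⱼ, Bⁱ, Bⁱ_b, B̂ⱼ, B̃ⱼ, Â, Ã ∈ ℂ (i, j ∈ {1, 2}) with the matrix (Cⁱⱼ) invertible, and define Ω' = Ω, E^{i′} = Σⱼ Cⁱⱼ Eʲ + Bⁱ Ω + Bⁱ_b Ω̄, E⁰₀′ = E⁰₀ + Σⱼ B̂ⱼ Eʲ + Σⱼ B̃ⱼ Ēʲ + Â Ω + Ã Ω̄, with Ē^{i′}, Ω̄′, Ē⁰₀′ their complex conjugates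 (so Ē^{i′} = Σⱼ C̄ⁱⱼ Ēʲ + B̄ⁱ Ω̄ + B̄ⁱ_b Ω). If there exist σ′, τ′ ∈ ℂ with Φ = −E⁰₀′ ∧ Ω′ + Ē¹′ ∧ E²′ + σ′ E¹′ ∧ Ω̄′ + τ′ Ē²′ ∧ Ω̄′, then necessarily C¹₁ C̄²₂ = 1, C¹₂ = C²₁ = 0, B¹ = B²_b = 0, B̃₁ = C̄¹₁ B², B̂₂ = −B̄¹_b C²₂, B̂₁ = B̃₂ = Ã = 0, and moreover σ′ = C̄²₂ σ and τ′ = C¹₁ τ. -/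
open ExteriorAlgebra

/-- Two covectors give a linear functional on the exterior algebra pairing with 2-vectors. -/
lemma exists_pairing {M : Type*} [AddCommGroup M] [Module ℂ M] (f g : Module.Dual ℂ M) :
    ∃ L : ExteriorAlgebra ℂ M →ₗ[ℂ] ℂ, ∀ x y : M, L (ι ℂ x * ι ℂ y) = f x * g y - f y * g x := by
  refine ⟨(ExteriorAlgebra.algebraMapInv (R := ℂ) (M := M)).toLinearMap ∘ₗ
    (CliffordAlgebra.contractLeft (Q := (0 : QuadraticForm ℂ M)) g) ∘ₗ
    (CliffordAlgebra.contractLeft (Q := (0 : QuadraticForm ℂ M)) f), fun x y => ?_⟩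
  have h1 : CliffordAlgebra.contractLeft (Q := (0 : QuadraticForm ℂ M)) f (ι ℂ x * ι ℂ y)
      = f x • ι ℂ y - f y • ι ℂ x := by
    have := CliffordAlgebra.contractLeft_ι_mul (Q := (0 : QuadraticForm ℂ M)) f x (ι ℂ y)
    refine this.trans ?_
    have h2 := CliffordAlgebra.contractLeft_ι (Q := (0 : QuadraticForm ℂ M)) f y
    erw [h2]
    rw [← Algebra.commutes, ← Algebra.smul_def]
  have h3 : ∀ z : M, CliffordAlgebra.contractLeft (Q := (0 : QuadraticForm ℂ M)) g (ι ℂ z)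
      = algebraMap ℂ (ExteriorAlgebra ℂ M) (g z) := fun z =>
    CliffordAlgebra.contractLeft_ι (Q := (0 : QuadraticForm ℂ M)) g z
  have h4 : ∀ z : ℂ, ExteriorAlgebra.algebraMapInv (R := ℂ) (M := M)
      (algebraMap ℂ (ExteriorAlgebra ℂ M) z) = z := ExteriorAlgebra.algebraMap_leftInverse M
  simp only [LinearMap.comp_apply, h1, map_sub, map_smul, h3, AlgHom.toLinearMap_apply, h4,
    smul_eq_mul]

/-- the key computation of §5.2, formulas (5.8)–(5.10).
In the complexified dual `W*_ℂ` of an 8-dimensional real vector space, with conjugation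
`conj` and a basis `(Ω, Ω̄, E¹, Ē¹, E², Ē², E⁰₀, Ē⁰₀)`, suppose the 2-form
`Φ = −E⁰₀ ∧ Ω + Ē¹ ∧ E² + σ E¹ ∧ Ω̄ + τ Ē² ∧ Ω̄` is also expressible in the same shape in
the transformed coframe `Ω' = Ω`, `E^{i′} = Σⱼ Cⁱⱼ Eʲ + Bⁱ Ω + Bⁱ_b Ω̄`,
`E⁰₀′ = E⁰₀ + Σⱼ B̂ⱼ Eʲ + Σⱼ B̃ⱼ Ēʲ + Â Ω + Ã Ω̄` (with `(Cⁱⱼ)` invertible), say with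
coefficients `σ′, τ′`.  Then necessarily `C¹₁ C̄²₂ = 1`, `C¹₂ = C²₁ = 0`,
`B¹ = B²_b = 0`, `B̃₁ = C̄¹₁ B²`, `B̂₂ = −B̄¹_b C²₂`, `B̂₁ = B̃₂ = Ã = 0`, and moreover
`σ′ = C̄²₂ σ` and `τ′ = C¹₁ τ`. -/
theorem chern_moser_stmt_19
    (M : Type*) [AddCommGroup M] [Module ℂ M]
    (conj : M → M)
    (conj_add : ∀ x y : M, conj (x + y) = conj x + conj y)
    (conj_smul : ∀ (z : ℂ) (x : M), conj (z • x) = (starRingEnd ℂ z) • conj x)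
    (conj_conj : ∀ x : M, conj (conj x) = x)
    (Om E1 E2 E00 : M)
    (hindep : LinearIndependent ℂ
      ![Om, conj Om, E1, conj E1, E2, conj E2, E00, conj E00])
    (hspan : Submodule.span ℂ
      (Set.range ![Om, conj Om, E1, conj E1, E2, conj E2, E00, conj E00]) = ⊤)
    (σ τ : ℂ)
    (C11 C12 C21 C22 B1 B2 B1b B2b Bh1 Bh2 Bt1 Bt2 Ah At : ℂ)
    (hC : C11 * C22 - C12 * C21 ≠ 0)
    (E1' E2' E00' : M)
    (hE1' : E1' = C11 • E1 + C12 • E2 + B1 • Om + B1b • conj Om)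
    (hE2' : E2' = C21 • E1 + C22 • E2 + B2 • Om + B2b • conj Om)
    (hE00' : E00' = E00 + Bh1 • E1 + Bh2 • E2 + Bt1 • conj E1 + Bt2 • conj E2
      + Ah • Om + At • conj Om)
    (σ' τ' : ℂ)
    (hΦ :
      -(ι ℂ E00 * ι ℂ Om) + ι ℂ (conj E1) * ι ℂ E2
          + σ • (ι ℂ E1 * ι ℂ (conj Om)) + τ • (ι ℂ (conj E2) * ι ℂ (conj Om))
        = -(ι ℂ E00' * ι ℂ Om) + ι ℂ (conj E1') * ι ℂ E2'
          + σ' • (ι ℂ E1' * ι ℂ (conj Om))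
          + τ' • (ι ℂ (conj E2') * ι ℂ (conj Om))) :
    C11 * starRingEnd ℂ C22 = 1 ∧ C12 = 0 ∧ C21 = 0 ∧ B1 = 0 ∧ B2b = 0 ∧
    Bt1 = starRingEnd ℂ C11 * B2 ∧ Bh2 = -(starRingEnd ℂ B1b * C22) ∧
    Bh1 = 0 ∧ Bt2 = 0 ∧ At = 0 ∧
    σ' = starRingEnd ℂ C22 * σ ∧ τ' = C11 * τ := by
  set v : Fin 8 → M := ![Om, conj Om, E1, conj E1, E2, conj E2, E00, conj E00] with hv
  let b : Module.Basis (Fin 8) ℂ M := Module.Basis.mk hindep hspan.ge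
  have hb : ∀ i j, b.coord i (v j) = if j = i then 1 else 0 := by
    intro i j
    have : v j = b j := by simp [b]
    rw [this, Module.Basis.coord_apply, Module.Basis.repr_self, Finsupp.single_apply]
  have a0 : ∀ i, b.coord i Om = if (0 : Fin 8) = i then 1 else 0 := fun i => hb i 0
  have a1 : ∀ i, b.coord i (conj Om) = if (1 : Fin 8) = i then 1 else 0 := fun i => hb i 1
  have a2 : ∀ i, b.coord i E1 = if (2 : Fin 8) = i then 1 else 0 := fun i => hb i 2
  have a3 : ∀ i, b.coord i (conj E1) = if (3 : Fin 8) = i then 1 else 0 := fun i => hb i 3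
  have a4 : ∀ i, b.coord i E2 = if (4 : Fin 8) = i then 1 else 0 := fun i => hb i 4
  have a5 : ∀ i, b.coord i (conj E2) = if (5 : Fin 8) = i then 1 else 0 := fun i => hb i 5
  have a6 : ∀ i, b.coord i E00 = if (6 : Fin 8) = i then 1 else 0 := fun i => hb i 6
  clear_value b
  subst hE1' hE2' hE00'
  choose L hL using fun i j => exists_pairing (b.coord i) (b.coord j)
  have key := fun i j => congrArg (L i j) hΦ
  have m1 := fun i j => (L i j).map_add
  have m2 := fun i j => (L i j).map_neg
  have m3 := fun i j => (L i j).map_smul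
  simp only [m1, m2, m3, hL] at key
  simp only [map_add, map_smul, conj_add, conj_smul, conj_conj, a0, a1, a2, a3,
      a4, a5, a6, smul_eq_mul] at key
  have k31 := key 3 2
  have k34 := key 3 4
  have k52 := key 5 2
  have k54 := key 5 4
  have k30 := key 3 0
  have k3b := key 3 1
  have k20 := key 2 0
  have k40 := key 4 0
  have k21 := key 2 1
  have k41 := key 4 1
  have k50 := key 5 0
  have k51 := key 5 1
  have k01 := key 0 1
  clear key
  simp [Fin.ext_iff] at k31 k34 k52 k54 k30 k3b k20 k40 k21 k41 k50 k51 k01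
  have hc : C11 * starRingEnd ℂ C22 = 1 := by
    have h := congrArg (starRingEnd ℂ) k34
    simpa using h.symm
  have h11 : C11 ≠ 0 := by
    rintro rfl
    simp at hc
  have h22 : C22 ≠ 0 := by
    rintro rfl
    simp at hc
  have h21 : C21 = 0 := k31.resolve_left h11
  have h12 : C12 = 0 := k54.resolve_right h22
  subst h21 h12
  have hB1 : B1 = 0 := by simpa [h22] using k41
  have hB2b : B2b = 0 := by simpa [h11] using k3b
  subst hB1 hB2b
  simp only [map_zero, mul_zero, zero_mul, neg_zero, add_zero, zero_add, sub_zero]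
    at k20 k21 k50 k51 k01
  refine ⟨hc, rfl, rfl, rfl, rfl, ?_, ?_, ?_, ?_, k01.symm, ?_, ?_⟩
  · linear_combination k30
  · linear_combination k40
  · linear_combination k20
  · linear_combination k50
  · linear_combination (-starRingEnd ℂ C22) * k21 - σ' * hc
  · linear_combination (-C11) * k51 - τ' * hc
end
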